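/- Let k ≥ 2 and n ≥ 16k². If G has the maximum spectral radius among all simple graphs on n vertices containing no k pairwise edge-disjoint cycles (i.e., with φ ≤ k−1), then G has a dominating vertex. -/

import Mathlib

open scoped Classical

namespace PaperEDC

/-- `G` contains `m` pairwise edge-disjoint cycles. -/
def HasEDC {V : Type*} (G : SimpleGraph V) (m : ℕ) : Prop :=
  ∃ c : Fin m → Σ v : V, G.Walk v v,
    (∀ i, (c i).2.IsCycle) ∧
    ∀ i j, i ≠ j → ∀ e ∈ (c i).2.edges, e ∉ (c j).2.edges

/-- `φ(G)`: the maximum number of pairwise edge-disjoint cycles in `G`. -/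
noncomputable def phi {V : Type*} (G : SimpleGraph V) : ℕ := sSup {m | HasEDC G m}

/-- `K₁ ∇ H`: the join of a single new vertex with `H`. -/
def joinK1 {V : Type*} (H : SimpleGraph V) : SimpleGraph (Option V) :=
  SimpleGraph.fromRel fun a b => a = none ∨ ∃ u v, a = some u ∧ b = some v ∧ H.Adj u v

/-- `t(G)`: the number of triangles of `G`. -/
noncomputable def triCount {V : Type*} (G : SimpleGraph V) : ℕ :=
  Nat.card {s : Finset V // G.IsNClique 3 s}

/-- A triangle-cactus: a connected graph in which every edge lies on a cycle and every
cycle is a triangle. -/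
def IsTriangleCactus {V : Type*} (G : SimpleGraph V) : Prop :=
  G.Connected ∧
  (∀ e ∈ G.edgeSet, ∃ (v : V) (w : G.Walk v v), w.IsCycle ∧ e ∈ w.edges) ∧
  ∀ (v : V) (w : G.Walk v v), w.IsCycle → w.length = 3

/-- `e(G)`: the number of edges of `G`. -/
noncomputable def ecard {V : Type*} (G : SimpleGraph V) : ℕ := Nat.card G.edgeSet

/-- `ρ(G)`: the spectral radius (largest adjacency eigenvalue) of `G`. -/
noncomputable def specRad {V : Type*} [Fintype V] (G : SimpleGraph V) : ℝ :=
  sSup {x : ℝ | ∃ f : V → ℝ, f ≠ 0 ∧ ∀ v : V, ∑ u : V, (if G.Adj v u then f u else 0) = x * f v}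

section A
variable {V : Type*}

lemma edges_ne_nil_of_cycle {G : SimpleGraph V} {v : V} (c : G.Walk v v) (hc : c.IsCycle) :
    ∃ e, e ∈ c.edges := by
  have h3 := hc.three_le_length
  have : c.edges.length ≠ 0 := by rw [SimpleGraph.Walk.length_edges]; omega
  exact List.exists_mem_of_ne_nil _ (fun h => this (by rw [h]; rfl))

lemma hasEDC_le [Fintype V] {G : SimpleGraph V} {m : ℕ} (h : HasEDC G m) :
    m ≤ Fintype.card (Sym2 V) := by
  obtain ⟨c, hc, hd⟩ := h
  choose f hf using fun i => edges_ne_nil_of_cycle (c i).2 (hc i)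
  have : Function.Injective f := by
    intro i j hij
    by_contra hne
    exact hd i j hne (f i) (hf i) (hij ▸ hf j)
  simpa using Fintype.card_le_of_injective f this

lemma hasEDC_le_phi [Fintype V] {G : SimpleGraph V} {m : ℕ} (h : HasEDC G m) :
    m ≤ phi G := le_csSup ⟨_, fun _ hm => hasEDC_le hm⟩ h

lemma hasEDC_zero (G : SimpleGraph V) : HasEDC G 0 :=
  ⟨fun i => i.elim0, fun i => i.elim0, fun i => i.elim0⟩

lemma phi_le [Fintype V] {G : SimpleGraph V} {K : ℕ} (h : ∀ m, HasEDC G m → m ≤ K) :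
    phi G ≤ K := csSup_le ⟨0, hasEDC_zero G⟩ h

/-- transfer of cycle systems -/
lemma hasEDC_transfer {G H : SimpleGraph V} {m : ℕ} (h : HasEDC G m)
    (hH : ∀ (v : V) (c : G.Walk v v), c.IsCycle → ∀ e ∈ c.edges, e ∈ H.edgeSet) : HasEDC H m := by
  obtain ⟨c, hc, hd⟩ := h
  refine ⟨fun i => ⟨(c i).1, (c i).2.transfer H (hH _ _ (hc i))⟩, fun i => (hc i).transfer _, ?_⟩
  intro i j hij e he
  simp only [SimpleGraph.Walk.edges_transfer] at he ⊢
  exact hd i j hij e he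

lemma hasEDC_mono {G H : SimpleGraph V} (hGH : G ≤ H) {m : ℕ} (h : HasEDC G m) : HasEDC H m :=
  hasEDC_transfer h (fun _ c _ _ he =>
    SimpleGraph.edgeSet_mono hGH (SimpleGraph.Walk.edges_subset_edgeSet c he))

lemma hasEDC_succ {G H : SimpleGraph V} (hHG : H ≤ G) {v : V} (c : G.Walk v v) (hc : c.IsCycle)
    (hd : ∀ e ∈ c.edges, e ∉ H.edgeSet) {m : ℕ} (h : HasEDC H m) : HasEDC G (m + 1) := by
  obtain ⟨d, hdc, hdd⟩ := h
  have key : ∀ i, ∀ e ∈ (d i).2.edges, e ∈ G.edgeSet := fun i e he =>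
    SimpleGraph.edgeSet_mono hHG (SimpleGraph.Walk.edges_subset_edgeSet _ he)
  refine ⟨Fin.cons ⟨v, c⟩ (fun i => ⟨(d i).1, (d i).2.transfer G (key i)⟩), ?_, ?_⟩
  · intro i
    refine Fin.cases ?_ (fun i => ?_) i
    · exact hc
    · exact (hdc i).transfer _
  · intro i j
    refine Fin.cases ?_ (fun i => ?_) i <;> refine Fin.cases ?_ (fun j => ?_) j
    · intro h; exact absurd rfl h
    · intro _ e he
      change e ∉ ((d j).2.transfer G (key j)).edges
      rw [SimpleGraph.Walk.edges_transfer]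
      exact fun h => hd e he (SimpleGraph.Walk.edges_subset_edgeSet _ h)
    · intro _ e he
      change e ∈ ((d i).2.transfer G (key i)).edges at he
      rw [SimpleGraph.Walk.edges_transfer] at he
      exact fun h => hd e h (SimpleGraph.Walk.edges_subset_edgeSet _ he)
    · intro hij e he
      change e ∈ ((d i).2.transfer G (key i)).edges at he
      change e ∉ ((d j).2.transfer G (key j)).edges
      rw [SimpleGraph.Walk.edges_transfer] at he ⊢
      exact hdd i j (fun h => hij (by rw [h])) e he

lemma hasEDC_pred {G : SimpleGraph V} {m : ℕ} (h : HasEDC G (m+1)) : HasEDC G m := by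
  obtain ⟨c, hc, hd⟩ := h
  exact ⟨fun i => c i.castSucc, fun i => hc _, fun i j hij => hd _ _ (fun h => hij (Fin.castSucc_injective _ h))⟩

lemma hasEDC_one_of_not_acyclic {G : SimpleGraph V} (h : ¬ G.IsAcyclic) :
    ∃ (v : V) (c : G.Walk v v), c.IsCycle := by
  unfold SimpleGraph.IsAcyclic at h
  push Not at h
  exact h

lemma not_hasEDC_of_acyclic {G : SimpleGraph V} (h : G.IsAcyclic) {m : ℕ} (hm : HasEDC G m) : m = 0 := by
  obtain ⟨c, hc, -⟩ := hm
  by_contra hne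
  exact h _ (hc ⟨0, Nat.pos_of_ne_zero hne⟩)

/-- parent function of a forest -/
lemma exists_parent {G : SimpleGraph V} (h : G.IsAcyclic) :
    ∃ p : V → V, ∀ v w, G.Adj v w → p v = w ∨ p w = v := by
  let root : V → V := fun v => (G.connectedComponentMk v).out
  have hr : ∀ v, G.Reachable v (root v) := fun v =>
    (SimpleGraph.ConnectedComponent.exact (Quot.out_eq (G.connectedComponentMk v))).symm
  choose P hP using fun v => (hr v).exists_isPath
  refine ⟨fun v => (P v).snd, fun v w hvw => ?_⟩
  have hroot : root v = root w := by
    have : G.connectedComponentMk v = G.connectedComponentMk w :=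
      SimpleGraph.ConnectedComponent.sound hvw.reachable
    simp only [root, this]
  have e : ∃ Pw : G.Walk w (root v), Pw.IsPath ∧ Pw.snd = (P w).snd := by
    rw [hroot]; exact ⟨P w, hP w, rfl⟩
  obtain ⟨Pw, hPw, hsnd⟩ := e
  by_cases hm : w ∈ (P v).support
  · left
    exact (h.eq_snd_of_adj_start (hP v) hvw hm).symm
  · right
    have hc : (SimpleGraph.Walk.cons hvw.symm (P v)).IsPath := (hP v).cons hm
    have := h.subsingleton_path w (root v) |>.elim ⟨_, hPw⟩ ⟨_, hc⟩
    have h2 := Subtype.mk.inj this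
    change (P w).snd = v
    rw [← hsnd, h2]
    simp

lemma cycle_degree [Fintype V] {G : SimpleGraph V} {u : V} (c : G.Walk u u) (hc : c.IsCycle) (v : V) :
    (Finset.univ.filter (fun w => s(v, w) ∈ c.edges)).card ≤ 2 := by
  have e : ((Finset.univ.filter (fun w => s(v, w) ∈ c.edges)) : Set V) = c.toSubgraph.neighborSet v := by
    ext w
    simp [SimpleGraph.Walk.adj_toSubgraph_iff_mem_edges]
  rw [← Set.ncard_coe_finset, e]
  by_cases hv : v ∈ c.support
  · exact (hc.ncard_neighborSet_toSubgraph_eq_two hv).le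
  · have : c.toSubgraph.neighborSet v = ∅ := by
      ext w
      simp only [SimpleGraph.Subgraph.mem_neighborSet, Set.mem_empty_iff_false, iff_false]
      intro h
      exact hv (by simpa using h.fst_mem)
    rw [this]; simp

lemma lemma_D [Fintype V] (m : ℕ) : ∀ (J : SimpleGraph V), ¬ HasEDC J (m + 1) →
    ∃ (p : V → V) (U : V → V → Prop), (∀ v w, U v w → U w v) ∧
      (∀ v, (Finset.univ.filter (fun w => U v w)).card ≤ 2 * m) ∧
      ∀ v w, J.Adj v w → p v = w ∨ p w = v ∨ U v w := by
  have base : ∀ (m : ℕ) (J : SimpleGraph V), J.IsAcyclic → ∃ (p : V → V) (U : V → V → Prop), (∀ v w, U v w → U w v) ∧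
      (∀ v, (Finset.univ.filter (fun w => U v w)).card ≤ 2 * m) ∧
      ∀ v w, J.Adj v w → p v = w ∨ p w = v ∨ U v w := by
    intro m J hJ
    obtain ⟨p, hp⟩ := exists_parent hJ
    refine ⟨p, fun _ _ => False, fun _ _ h => h, by simp, fun v w h => ?_⟩
    rcases hp v w h with h | h
    · exact Or.inl h
    · exact Or.inr (Or.inl h)
  induction m with
  | zero =>
    intro J hJ
    apply base
    by_contra hac
    obtain ⟨v, c, hc⟩ := hasEDC_one_of_not_acyclic hac
    exact hJ ⟨fun _ => ⟨v, c⟩, fun _ => hc, fun i j hij => absurd (Fin.ext (by omega)) hij⟩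
  | succ m ih =>
    intro J hJ
    by_cases hac : J.IsAcyclic
    · exact base _ J hac
    obtain ⟨x, c, hc⟩ := hasEDC_one_of_not_acyclic hac
    have h1 : ¬ HasEDC (J.deleteEdges {e | e ∈ c.edges}) (m + 1) := by
      intro h
      refine hJ (hasEDC_succ (SimpleGraph.deleteEdges_le _) c hc ?_ h)
      intro e he h'
      rw [SimpleGraph.edgeSet_deleteEdges] at h'
      exact h'.2 he
    obtain ⟨p, U, hs, hd, hU⟩ := ih _ h1
    refine ⟨p, fun v w => U v w ∨ s(v, w) ∈ c.edges, ?_, ?_, ?_⟩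
    · intro v w h
      rcases h with h | h
      · exact Or.inl (hs _ _ h)
      · right; rwa [Sym2.eq_swap]
    · intro v
      have := Finset.card_union_le (Finset.univ.filter (fun w => U v w)) (Finset.univ.filter (fun w => s(v, w) ∈ c.edges))
      have h2 := cycle_degree c hc v
      have h3 := hd v
      refine (Finset.card_le_card (t := Finset.univ.filter (fun w => U v w) ∪
        Finset.univ.filter (fun w => s(v, w) ∈ c.edges)) ?_).trans (by omega)
      intro w
      simp
    · intro v w hvw
      by_cases he : s(v, w) ∈ c.edges
      · exact Or.inr (Or.inr (Or.inr he))
      · have : (J.deleteEdges {e | e ∈ c.edges}).Adj v w := by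
          rw [SimpleGraph.deleteEdges_adj]; exact ⟨hvw, he⟩
        rcases hU v w this with h | h | h
        · exact Or.inl h
        · exact Or.inr (Or.inl h)
        · exact Or.inr (Or.inr (Or.inl h))
end A

section B
variable {V : Type*}

/-- state of the cycle removal process around `u` -/
structure St [Fintype V] (G : SimpleGraph V) (u : V) (t : ℕ) (G' : SimpleGraph V) : Prop where
  le : G' ≤ G
  edc : ∀ j, HasEDC G' j → HasEDC G (j + t)
  inv : ∀ a, G'.Adj u a → ∀ b, G.Adj a b → G'.Adj a b
  cardT : (Finset.univ.filter (fun a => G.Adj u a ∧ ¬ G'.Adj u a)).card = 2 * t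
  pairs : (Finset.univ.filter (fun q : V × V => (q.1 ≠ u ∧ q.2 ≠ u) ∧
    G.Adj q.1 q.2 ∧ ¬ G'.Adj q.1 q.2)).card ≤ 4 * t
  pairsS : (Finset.univ.filter (fun q : V × V => ((q.1 ≠ u ∧ q.2 ≠ u) ∧ ¬ G.Adj u q.1) ∧
    G.Adj q.1 q.2 ∧ ¬ G'.Adj q.1 q.2)).card ≤ 2 * t

lemma St.zero [Fintype V] (G : SimpleGraph V) (u : V) : St G u 0 G where
  le := le_rfl
  edc := fun j h => h
  inv := fun _ _ _ h => h
  cardT := by simp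
  pairs := by simp
  pairsS := by simp

lemma St.step [Fintype V] {G G' G'' : SimpleGraph V} {u : V} {t : ℕ} (h : St G u t G')
    {a b : V} (hab : a ≠ b) (ha : G'.Adj u a) (hb : G'.Adj u b)
    (hle : G'' ≤ G') (hN : ∀ x, G''.Adj u x ↔ G'.Adj u x ∧ x ≠ a ∧ x ≠ b)
    (hE : ∀ j, HasEDC G'' j → HasEDC G' (j + 1)) (P PS : Finset (V × V))
    (hP : ∀ v w, v ≠ u → w ≠ u → G'.Adj v w → ¬ G''.Adj v w → (v, w) ∈ P)
    (hPN : ∀ q ∈ P, ¬ G''.Adj u q.1) (hPc : P.card ≤ 4)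
    (hPS : ∀ q ∈ P, ¬ G.Adj u q.1 → q ∈ PS) (hPSc : PS.card ≤ 2) : St G u (t + 1) G'' where
  le := hle.trans h.le
  edc := fun j hj => by
    have := h.edc _ (hE j hj)
    rwa [show j + (t + 1) = j + 1 + t by ring]
  inv := by
    intro x hx y hxy
    have h1 := h.inv x (hle hx) y hxy
    by_contra hn
    have hxu : x ≠ u := hx.ne'
    by_cases hy : y = u
    · subst hy; exact hn hx.symm
    · exact hPN _ (hP x y hxu hy h1 hn) hx
  cardT := by
    have : (Finset.univ.filter (fun a => G.Adj u a ∧ ¬ G''.Adj u a)) =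
        (Finset.univ.filter (fun a => G.Adj u a ∧ ¬ G'.Adj u a)) ∪ {a, b} := by
      ext x
      simp only [Finset.mem_filter, Finset.mem_univ, true_and, Finset.mem_union,
        Finset.mem_insert, Finset.mem_singleton, hN]
      constructor
      · rintro ⟨h1, h2⟩; tauto
      · rintro (h1 | rfl | rfl)
        · tauto
        · exact ⟨h.le ha, by tauto⟩
        · exact ⟨h.le hb, by tauto⟩
    rw [this, Finset.card_union_of_disjoint, h.cardT, Finset.card_pair hab]
    · ring
    · rw [Finset.disjoint_right]
      intro x hx
      simp only [Finset.mem_insert, Finset.mem_singleton] at hx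
      rcases hx with rfl | rfl <;> simp [ha, hb]
  pairs := by
    have h1 := h.pairs
    have h2 := Finset.card_union_le (Finset.univ.filter (fun q : V × V => (q.1 ≠ u ∧ q.2 ≠ u) ∧
      G.Adj q.1 q.2 ∧ ¬ G'.Adj q.1 q.2)) P
    refine (Finset.card_le_card ?_).trans (h2.trans (by omega))
    intro q hq
    simp only [Finset.mem_filter, Finset.mem_univ, true_and, Finset.mem_union] at hq ⊢
    by_cases h3 : G'.Adj q.1 q.2
    · right; exact hP _ _ hq.1.1 hq.1.2 h3 hq.2.2
    · left; exact ⟨hq.1, hq.2.1, h3⟩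
  pairsS := by
    have h1 := h.pairsS
    have h2 := Finset.card_union_le (Finset.univ.filter (fun q : V × V => ((q.1 ≠ u ∧ q.2 ≠ u) ∧
      ¬ G.Adj u q.1) ∧ G.Adj q.1 q.2 ∧ ¬ G'.Adj q.1 q.2)) PS
    refine (Finset.card_le_card ?_).trans (h2.trans (by omega))
    intro q hq
    simp only [Finset.mem_filter, Finset.mem_univ, true_and, Finset.mem_union] at hq ⊢
    by_cases h3 : G'.Adj q.1 q.2
    · right; exact hPS _ (hP _ _ hq.1.1.1 hq.1.1.2 h3 hq.2.2) hq.1.2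
    · left; exact ⟨hq.1, hq.2.1, h3⟩

lemma del_edc {G : SimpleGraph V} {v : V} (c : G.Walk v v) (hc : c.IsCycle) (S : Set (Sym2 V))
    (hS : ∀ e ∈ c.edges, e ∈ S) (j : ℕ) (h : HasEDC (G.deleteEdges S) j) : HasEDC G (j + 1) := by
  refine hasEDC_succ (SimpleGraph.deleteEdges_le _) c hc ?_ h
  intro e he h'
  rw [SimpleGraph.edgeSet_deleteEdges] at h'
  exact h'.2 (hS e he)

lemma St.triangle [Fintype V] {G G' : SimpleGraph V} {u : V} {t : ℕ} (h : St G u t G')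
    {a b : V} (ha : G'.Adj u a) (hb : G'.Adj u b) (hab : G'.Adj a b) :
    ∃ G'', St G u (t + 1) G'' := by
  have n1 := ha.ne
  have n2 := hb.ne
  have n3 := hab.ne
  refine ⟨G'.deleteEdges {s(u, a), s(a, b), s(b, u)}, h.step n3 ha hb (SimpleGraph.deleteEdges_le _)
    ?_ ?_ {(a, b), (b, a)} ∅ ?_ ?_ ?_ ?_ ?_⟩
  · intro x
    rw [SimpleGraph.deleteEdges_adj]
    simp only [Set.mem_insert_iff, Set.mem_singleton_iff, Sym2.eq_iff]
    constructor
    · rintro ⟨h1, h2⟩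
      refine ⟨h1, ?_, ?_⟩ <;> rintro rfl <;> simp at h2
    · rintro ⟨h1, h2, h3⟩
      refine ⟨h1, ?_⟩
      rintro ((h|h)|(h|h)|(h|h)) <;> grind
  · refine del_edc (.cons ha (.cons hab (.cons hb.symm .nil))) ?_ _ ?_
    · simp [SimpleGraph.Walk.cons_isCycle_iff, n1, n2, n3, n1.symm, n2.symm, n3.symm]
    · intro e he; simpa using he
  · intro v w hv hw h1 h2
    rw [SimpleGraph.deleteEdges_adj] at h2
    simp only [Set.mem_insert_iff, Set.mem_singleton_iff, Sym2.eq_iff] at h2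
    simp only [Finset.mem_insert, Finset.mem_singleton, Prod.mk.injEq]
    tauto
  · intro q hq
    simp only [Finset.mem_insert, Finset.mem_singleton] at hq
    rcases hq with rfl | rfl <;> simp
  · exact Finset.card_le_two.trans (by norm_num)
  · intro q hq
    simp only [Finset.mem_insert, Finset.mem_singleton] at hq
    rcases hq with rfl | rfl
    · intro h1; exact absurd (h.le ha) h1
    · intro h1; exact absurd (h.le hb) h1
  · simp

lemma St.square [Fintype V] {G G' : SimpleGraph V} {u : V} {t : ℕ} (h : St G u t G')
    {a b w : V} (ha : G'.Adj u a) (hb : G'.Adj u b) (hab : a ≠ b) (haw : G'.Adj a w)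
    (hwb : G'.Adj w b) (hwu : w ≠ u) (hw : ¬ G'.Adj u w) :
    ∃ G'', St G u (t + 1) G'' := by
  have n1 := ha.ne
  have n2 := hb.ne
  have n3 := haw.ne
  have n4 := hwb.ne
  refine ⟨G'.deleteEdges {s(u, a), s(a, w), s(w, b), s(b, u)},
    h.step hab ha hb (SimpleGraph.deleteEdges_le _)
    ?_ ?_ {(a, w), (w, a), (b, w), (w, b)} {(w, a), (w, b)} ?_ ?_ ?_ ?_ ?_⟩
  · intro x
    rw [SimpleGraph.deleteEdges_adj]
    simp only [Set.mem_insert_iff, Set.mem_singleton_iff, Sym2.eq_iff]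
    constructor
    · rintro ⟨h1, h2⟩
      refine ⟨h1, ?_, ?_⟩ <;> rintro rfl <;> simp at h2
    · rintro ⟨h1, h2, h3⟩
      refine ⟨h1, ?_⟩
      rintro ((h|h)|(h|h)|(h|h)|(h|h)) <;> grind
  · refine del_edc (.cons ha (.cons haw (.cons hwb (.cons hb.symm .nil)))) ?_ _ ?_
    · simp [SimpleGraph.Walk.cons_isCycle_iff, n1, n2, n3, n4, hab, hwu, hwu.symm, hab.symm, n4.symm, n1.symm, n2.symm, n3.symm]
    · intro e he; simpa using he
  · intro v w hv hw h1 h2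
    rw [SimpleGraph.deleteEdges_adj] at h2
    simp only [Set.mem_insert_iff, Set.mem_singleton_iff, Sym2.eq_iff] at h2
    simp only [Finset.mem_insert, Finset.mem_singleton, Prod.mk.injEq]
    tauto
  · intro q hq
    simp only [Finset.mem_insert, Finset.mem_singleton] at hq
    rcases hq with rfl | rfl | rfl | rfl <;> simp [hw]
  · exact Finset.card_le_four
  · intro q hq
    simp only [Finset.mem_insert, Finset.mem_singleton] at hq ⊢
    rcases hq with rfl | rfl | rfl | rfl
    · intro h1; exact absurd (h.le ha) h1
    · simp
    · intro h1; exact absurd (h.le hb) h1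
    · simp
  · exact Finset.card_le_two

lemma exists_St [Fintype V] {G : SimpleGraph V} (u : V) {K : ℕ} (hG : ¬ HasEDC G (K + 1)) :
    ∃ t G', t ≤ K ∧ St G u t G' ∧ ¬ HasEDC G' (K - t + 1) ∧
      (∀ a b, G'.Adj u a → G'.Adj u b → ¬ G.Adj a b) ∧
      (∀ w a b, w ≠ u → G'.Adj u a → G'.Adj u b → G.Adj w a → G.Adj w b → a = b) := by
  have hmono : ∀ m m', m ≤ m' → HasEDC G m' → HasEDC G m := by
    intro m m' h
    induction h with
    | refl => exact id
    | step _ ih => exact fun h => ih (hasEDC_pred h)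
  have hle : ∀ t G', St G u t G' → t ≤ K := by
    intro t G' h
    by_contra hlt
    have := h.edc 0 (hasEDC_zero _)
    exact hG (hmono _ _ (by omega) this)
  have : ∃ t G', St G u t G' ∧ ¬ ∃ G'', St G u (t + 1) G'' := by
    by_contra hcon
    push Not at hcon
    have : ∀ t, ∃ G', St G u t G' := by
      intro t
      induction t with
      | zero => exact ⟨G, St.zero G u⟩
      | succ t ih => obtain ⟨G', h⟩ := ih; exact hcon t G' h
    obtain ⟨G', h⟩ := this (K + 1)
    have := hle _ _ h
    omega
  obtain ⟨t, G', h, hn⟩ := this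
  have htri : ∀ a b, G'.Adj u a → G'.Adj u b → ¬ G.Adj a b := fun a b ha hb hab =>
    hn (h.triangle ha hb (h.inv a ha b hab))
  refine ⟨t, G', hle _ _ h, h, ?_, htri, ?_⟩
  · intro h1
    have := h.edc _ h1
    have ht := hle _ _ h
    exact hG (hmono _ _ (by omega) this)
  · intro w a b hwu ha hb hwa hwb
    by_contra hab
    have h1 := h.inv a ha w hwa.symm
    exact hn (h.square ha hb hab h1 (h.inv b hb w hwb.symm).symm hwu
      (fun hw => htri a w ha hw hwa.symm))
end B

section C
variable {V : Type*} [Fintype V]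

/-- adjacency operator -/
noncomputable def Op (G : SimpleGraph V) (f : V → ℝ) (v : V) : ℝ :=
  ∑ u : V, (if G.Adj v u then f u else 0)

lemma op_eq (G : SimpleGraph V) (f : V → ℝ) : (G.adjMatrix ℝ).mulVec f = Op G f := by
  ext v
  simp [Op, SimpleGraph.adjMatrix_mulVec_apply, Finset.sum_ite, SimpleGraph.neighborFinset_eq_filter]

lemma eig_finite (G : SimpleGraph V) :
    {x : ℝ | ∃ f : V → ℝ, f ≠ 0 ∧ ∀ v : V, Op G f v = x * f v}.Finite := by
  refine (Module.End.finite_hasEigenvalue (Matrix.toLin' (G.adjMatrix ℝ))).subset ?_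
  rintro x ⟨f, hf, h⟩
  refine Module.End.hasEigenvalue_of_hasEigenvector (x := f) ⟨?_, hf⟩
  rw [Module.End.mem_eigenspace_iff, Matrix.toLin'_apply, op_eq]
  ext v
  simpa using h v

lemma eig_nonempty [Nonempty V] (G : SimpleGraph V) :
    {x : ℝ | ∃ f : V → ℝ, f ≠ 0 ∧ ∀ v : V, Op G f v = x * f v}.Nonempty := by
  have hA : (G.adjMatrix ℝ).IsHermitian := G.isHermitian_adjMatrix ℝ
  obtain ⟨j⟩ := ‹Nonempty V›
  refine ⟨hA.eigenvalues j, (hA.eigenvectorBasis j).ofLp, ?_, ?_⟩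
  · intro h
    apply hA.eigenvectorBasis.toBasis.ne_zero j
    ext v
    simpa using congrFun h v
  · intro v
    have := congrFun (hA.mulVec_eigenvectorBasis j) v
    rw [op_eq] at this
    simpa using this

lemma le_specRad (G : SimpleGraph V) {x : ℝ} {f : V → ℝ} (hf : f ≠ 0)
    (h : ∀ v, Op G f v = x * f v) : x ≤ specRad G :=
  le_csSup (eig_finite G).bddAbove ⟨f, hf, h⟩

lemma specRad_mem [Nonempty V] (G : SimpleGraph V) :
    ∃ f : V → ℝ, f ≠ 0 ∧ ∀ v : V, Op G f v = specRad G * f v :=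
  (eig_nonempty G).csSup_mem (eig_finite G)

lemma B_psd (G : SimpleGraph V) :
    (specRad G • (1 : Matrix V V ℝ) - G.adjMatrix ℝ).PosSemidef := by
  have hA : (specRad G • (1 : Matrix V V ℝ) - G.adjMatrix ℝ).IsHermitian := by
    refine Matrix.IsHermitian.sub ?_ (G.isHermitian_adjMatrix ℝ)
    ext i j
    simp [Matrix.one_apply, eq_comm]
  rw [hA.posSemidef_iff_eigenvalues_nonneg]
  intro j
  have h0 : (hA.eigenvectorBasis j).ofLp ≠ 0 := by
    intro h
    apply hA.eigenvectorBasis.toBasis.ne_zero j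
    ext v
    simpa using congrFun h v
  have h1 := hA.mulVec_eigenvectorBasis j
  rw [Matrix.sub_mulVec, Matrix.smul_mulVec, Matrix.one_mulVec, op_eq] at h1
  have := le_specRad G (x := specRad G - hA.eigenvalues j) h0 (fun v => by
    have := congrFun h1 v
    simp only [Pi.sub_apply, Pi.smul_apply, smul_eq_mul] at this
    linarith)
  simp only [Pi.zero_apply]
  linarith

lemma B_form (G : SimpleGraph V) (f : V → ℝ) :
    star f ⬝ᵥ (specRad G • (1 : Matrix V V ℝ) - G.adjMatrix ℝ).mulVec f =
      specRad G * ∑ v, f v * f v - ∑ v, f v * Op G f v := by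
  rw [Matrix.sub_mulVec, Matrix.smul_mulVec, Matrix.one_mulVec, op_eq]
  simp only [dotProduct, Pi.star_apply, star_trivial, Pi.sub_apply, Pi.smul_apply, smul_eq_mul]
  rw [Finset.mul_sum, ← Finset.sum_sub_distrib]
  refine Finset.sum_congr rfl fun v _ => by ring

lemma rayleigh (G : SimpleGraph V) (f : V → ℝ) :
    ∑ v, f v * Op G f v ≤ specRad G * ∑ v, f v * f v := by
  have := (B_psd G).dotProduct_mulVec_nonneg f
  rw [B_form] at this
  linarith

lemma rayleigh_eq (G : SimpleGraph V) (f : V → ℝ)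
    (h : specRad G * ∑ v, f v * f v ≤ ∑ v, f v * Op G f v) (v : V) :
    Op G f v = specRad G * f v := by
  have h0 := rayleigh G f
  have h1 := ((B_psd G).dotProduct_mulVec_zero_iff f).1 (by rw [B_form]; linarith)
  rw [Matrix.sub_mulVec, Matrix.smul_mulVec, Matrix.one_mulVec, op_eq] at h1
  have := congrFun h1 v
  simp only [Pi.sub_apply, Pi.smul_apply, smul_eq_mul, Pi.zero_apply] at this
  linarith

lemma perron [Nonempty V] (G : SimpleGraph V) :
    ∃ f : V → ℝ, f ≠ 0 ∧ (∀ v, 0 ≤ f v) ∧ ∀ v : V, Op G f v = specRad G * f v := by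
  obtain ⟨f, hf, h⟩ := specRad_mem G
  refine ⟨fun v => |f v|, ?_, fun v => abs_nonneg _, rayleigh_eq G _ ?_⟩
  · intro h0; apply hf; ext v
    simpa using congrFun h0 v
  · have e : ∀ v, |f v| * |f v| = f v * f v := fun v => abs_mul_abs_self _
    simp only [e]
    rw [Finset.mul_sum]
    apply Finset.sum_le_sum
    intro v _
    have : specRad G * (f v * f v) = f v * Op G f v := by rw [h]; ring
    rw [this]
    refine (le_abs_self _).trans ?_
    rw [abs_mul]
    refine mul_le_mul_of_nonneg_left ?_ (abs_nonneg _)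
    refine (Finset.abs_sum_le_sum_abs _ _).trans (Finset.sum_le_sum fun w _ => ?_)
    split_ifs <;> simp

lemma specRad_nonneg_of_star (G : SimpleGraph V) (u : V) (h : ∀ v, v ≠ u → G.Adj u v) :
    Real.sqrt (Fintype.card V - 1) ≤ specRad G := by
  set q := Real.sqrt ((Fintype.card V : ℝ) - 1) with hq
  have hc : (1 : ℝ) ≤ Fintype.card V := by
    have : 0 < Fintype.card V := Fintype.card_pos_iff.2 ⟨u⟩
    exact_mod_cast this
  have hqq : q * q = (Fintype.card V : ℝ) - 1 := Real.mul_self_sqrt (by linarith)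
  have hq0 : 0 ≤ q := Real.sqrt_nonneg _
  let f : V → ℝ := fun v => if v = u then q else 1
  have hf0 : ∀ v, 0 ≤ f v := fun v => by simp only [f]; split_ifs <;> linarith
  have hcard : ∑ v ∈ Finset.univ.erase u, (1 : ℝ) = (Fintype.card V : ℝ) - 1 := by
    rw [Finset.sum_const, Finset.card_erase_of_mem (Finset.mem_univ u), Finset.card_univ,
      nsmul_eq_mul, mul_one, Nat.cast_sub (by exact_mod_cast hc)]
    simp
  have hr := rayleigh G f
  have h1 : ∑ v, f v * f v = 2 * (q * q) := by
    rw [← Finset.add_sum_erase _ _ (Finset.mem_univ u)]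
    have : ∑ v ∈ Finset.univ.erase u, f v * f v = ∑ v ∈ Finset.univ.erase u, (1 : ℝ) :=
      Finset.sum_congr rfl fun v hv => by simp [f, Finset.ne_of_mem_erase hv]
    rw [this, hcard, ← hqq]; simp [f]; ring
  have h2 : 2 * (q * q) * q ≤ ∑ v, f v * Op G f v := by
    rw [← Finset.add_sum_erase _ _ (Finset.mem_univ u)]
    have a1 : q * q ≤ Op G f u := by
      rw [hqq, ← hcard, Op, ← Finset.add_sum_erase _ _ (Finset.mem_univ u)]
      simp only [SimpleGraph.irrefl, if_false, zero_add]
      refine Finset.sum_le_sum fun v hv => ?_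
      have := Finset.ne_of_mem_erase hv
      simp [h v this, f, this]
    have a2 : (q * q) * q ≤ ∑ v ∈ Finset.univ.erase u, f v * Op G f v := by
      rw [hqq, ← hcard, Finset.sum_mul]
      refine Finset.sum_le_sum fun v hv => ?_
      have hvu := Finset.ne_of_mem_erase hv
      have : q ≤ Op G f v := by
        have := Finset.single_le_sum (f := fun w => if G.Adj v w then f w else 0)
          (fun w _ => by split_ifs; exacts [hf0 w, le_rfl]) (Finset.mem_univ u)
        simpa [(h v hvu).symm, f, Op] using this
      simpa [f, hvu] using this
    have a3 : f u = q := by simp [f]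
    rw [a3]
    nlinarith [mul_le_mul_of_nonneg_left a1 hq0]
  rcases hq0.eq_or_lt with h0 | h0
  · rw [← h0]
    have : Nonempty V := ⟨u⟩
    by_contra hneg
    push Not at hneg
    -- all vertices equal u
    obtain ⟨g, hg, hgn, hge⟩ := perron G
    apply hg
    ext v
    have e1 := hge v
    have e2 : 0 ≤ Op G g v := Finset.sum_nonneg fun w _ => by split_ifs; exacts [hgn w, le_rfl]
    have e3 := hgn v
    simp only [Pi.zero_apply]
    by_contra h9
    have : 0 < g v := lt_of_le_of_ne e3 (Ne.symm h9)
    nlinarith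
  · rw [h1] at hr
    have : 0 < 2 * (q * q) := by positivity
    nlinarith

/-- the star -/
def starAt (u : V) : SimpleGraph V := SimpleGraph.fromRel fun a _ => a = u

lemma cycle_avoid {G : SimpleGraph V} {x : V} (c : G.Walk x x) (hc : c.IsCycle) (u v : V)
    (hv : ∀ w, G.Adj v w → w = u) : v ∉ c.support := by
  intro hs
  have h2 := hc.ncard_neighborSet_toSubgraph_eq_two hs
  have h1 : c.toSubgraph.neighborSet v ⊆ {u} := by
    intro w hw
    exact hv w (SimpleGraph.Subgraph.adj_sub _ hw)
  have := Set.ncard_le_ncard h1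
  rw [h2, Set.ncard_singleton] at this
  omega

lemma starAt_phi (u : V) (K : ℕ) : phi (starAt u) ≤ K := by
  apply phi_le
  intro m hm
  rw [not_hasEDC_of_acyclic ?_ hm]
  · exact Nat.zero_le _
  · intro x c hc
    have hx : ∀ v, v ≠ u → v ∉ c.support := by
      intro v hv
      refine cycle_avoid c hc u v ?_
      intro w hw
      simp only [starAt, SimpleGraph.fromRel_adj] at hw
      tauto
    obtain ⟨e, he⟩ := edges_ne_nil_of_cycle c hc
    induction e with
    | _ a b =>
      have hab := SimpleGraph.Walk.adj_of_mem_edges c he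
      have ha := SimpleGraph.Walk.fst_mem_support_of_mem_edges c he
      have hb := SimpleGraph.Walk.snd_mem_support_of_mem_edges c he
      have ha' : a = u := by by_contra h; exact hx a h ha
      have hb' : b = u := by by_contra h; exact hx b h hb
      exact hab.ne (ha'.trans hb'.symm)

/-- detach `v` and hang it on `u` -/
def rot (G : SimpleGraph V) (u v : V) : SimpleGraph V :=
  SimpleGraph.fromRel fun a b => (a ≠ v ∧ b ≠ v ∧ G.Adj a b) ∨ (a = u ∧ b = v)

lemma rot_adj (G : SimpleGraph V) {u v : V} (huv : v ≠ u) (a b : V) :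
    (rot G u v).Adj a b ↔ (a ≠ v ∧ b ≠ v ∧ G.Adj a b) ∨ (a = u ∧ b = v) ∨ (a = v ∧ b = u) := by
  simp only [rot, SimpleGraph.fromRel_adj]
  constructor
  · rintro ⟨h1, (h | h) | (h | h)⟩
    · tauto
    · tauto
    · exact Or.inl ⟨h.2.1, h.1, h.2.2.symm⟩
    · tauto
  · rintro (h | h | h)
    · exact ⟨h.2.2.ne, Or.inl (Or.inl h)⟩
    · refine ⟨?_, by tauto⟩
      rw [h.1, h.2]; exact huv.symm
    · refine ⟨?_, by tauto⟩
      rw [h.1, h.2]; exact huv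

lemma rot_phi {G : SimpleGraph V} {K : ℕ} (hG : phi G ≤ K) {u v : V} (huv : v ≠ u) :
    phi (rot G u v) ≤ K := by
  apply phi_le
  intro m hm
  refine (hasEDC_le_phi (hasEDC_transfer hm ?_)).trans hG
  intro x c hc e he
  have hv : v ∉ c.support := cycle_avoid c hc u v (fun w hw => by
    rw [rot_adj G huv] at hw
    rcases hw with h | h | h
    · exact absurd rfl h.1
    · exact absurd h.1 huv
    · exact h.2)
  induction e with
  | _ a b =>
    have hab := SimpleGraph.Walk.adj_of_mem_edges c he
    have ha := SimpleGraph.Walk.fst_mem_support_of_mem_edges c he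
    have hb := SimpleGraph.Walk.snd_mem_support_of_mem_edges c he
    rw [rot_adj G huv] at hab
    rcases hab with h | h | h
    · exact h.2.2
    · exact absurd (h.2 ▸ hb) hv
    · exact absurd (h.1 ▸ ha) hv

end C

section E
variable {V : Type*} [Fintype V]

lemma rot_op (G : SimpleGraph V) {u v : V} (huv : v ≠ u) (hn : ¬ G.Adj u v) (x : V → ℝ) (w : V)
    (hw : w ≠ v) : Op (rot G u v) x w =
      Op G x w - (if G.Adj w v then x v else 0) + (if w = u then x v else 0) := by
  have : ∀ z, (if (rot G u v).Adj w z then x z else 0) =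
      (if G.Adj w z then x z else 0) - (if z = v then (if G.Adj w v then x v else 0) else 0)
        + (if z = v then (if w = u then x v else 0) else 0) := by
    intro z
    simp only [rot_adj G huv]
    by_cases hz : z = v
    · subst hz
      by_cases h1 : w = u
      · subst h1; simp [hn]
      · simp [h1, hw]
    · simp [hz, hw]
  simp only [Op, this, Finset.sum_add_distrib, Finset.sum_sub_distrib, Finset.sum_ite_eq',
    Finset.mem_univ, if_true]

lemma rot_op_self (G : SimpleGraph V) {u v : V} (huv : v ≠ u) (x : V → ℝ) :
    Op (rot G u v) x v = x u := by
  have : ∀ z, (if (rot G u v).Adj v z then x z else 0) = (if z = u then x u else 0) := by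
    intro z
    simp only [rot_adj G huv]
    by_cases hz : z = u
    · subst hz; simp
    · simp [hz, huv]
  simp only [Op, this, Finset.sum_ite_eq', Finset.mem_univ, if_true]

lemma rot_form (G : SimpleGraph V) {u v : V} (huv : v ≠ u) (hn : ¬ G.Adj u v) (x : V → ℝ) :
    ∑ w, x w * Op (rot G u v) x w = ∑ w, x w * Op G x w + 2 * x v * (x u - Op G x v) := by
  have : ∀ w, x w * Op (rot G u v) x w = x w * Op G x w - x v * (if G.Adj v w then x w else 0)
      + (if w = u then x u * x v else 0) + (if w = v then x v * (x u - Op G x v) else 0) := by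
    intro w
    by_cases hw : w = v
    · subst hw
      rw [rot_op_self G huv]
      simp [huv]
      ring
    · rw [rot_op G huv hn x w hw, SimpleGraph.adj_comm G v w]
      by_cases h1 : w = u
      · subst h1; simp [hn, hw]; ring
      · simp only [h1, hw, if_false]
        split_ifs <;> ring
  simp only [this, Finset.sum_add_distrib, Finset.sum_sub_distrib, Finset.sum_ite_eq',
    Finset.mem_univ, if_true, ← Finset.mul_sum]
  change _ - x v * Op G x v + _ + _ = _
  ring

lemma far_lower {K : ℕ} {G : SimpleGraph V} (hG : phi G ≤ K)
    (hmax : ∀ G' : SimpleGraph V, phi G' ≤ K → specRad G' ≤ specRad G)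
    {x : V → ℝ} (hx0 : ∀ v, 0 ≤ x v) (hx : ∀ v, Op G x v = specRad G * x v)
    {u v : V} (hu : x u = 1) (huv : v ≠ u) (hn : ¬ G.Adj u v) : 1 ≤ specRad G * x v := by
  have h1 := hmax _ (rot_phi hG huv)
  have h2 := rayleigh (rot G u v) x
  have h3 := rot_form G huv hn x
  have h4 : ∑ w, x w * Op G x w = specRad G * ∑ w, x w * x w := by
    rw [Finset.mul_sum]; exact Finset.sum_congr rfl fun w _ => by rw [hx]; ring
  have hs : 0 ≤ ∑ w, x w * x w := Finset.sum_nonneg fun w _ => mul_self_nonneg _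
  have h5 := mul_le_mul_of_nonneg_right h1 hs
  rw [hx v, hu] at h3
  rcases (hx0 v).eq_or_lt with h0 | h0
  · exfalso
    rw [← h0] at h3
    have := rayleigh_eq (rot G u v) x (by rw [h3, h4]; linarith) v
    rw [rot_op_self G huv, ← h0, hu] at this
    simp at this
  · by_contra hlt
    push Not at hlt
    nlinarith [mul_pos h0 (sub_pos.2 hlt)]
end E

set_option maxHeartbeats 1000000 in
lemma numeric (K t s r M X XS D : ℝ) (hK : 1 ≤ K) (ht0 : 0 ≤ t) (htK : t ≤ K) (hs : 1 ≤ s)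
    (hD : D = 2 * (K - t)) (hr0 : 0 ≤ r) (hr : 16 * (K + 1) ^ 2 - 1 ≤ r ^ 2)
    (hM0 : 0 ≤ M) (hM1 : M ≤ 1) (hXS : 0 ≤ XS) (hX : XS ≤ X)
    (ha : r * M ≤ 1 + X)
    (hq : r * (r * X) ≤ r * (2 * t + 4 * t * M + (2 * t + s) * M + (1 + D) * X)
      + (2 * t + s) + (1 + D) * X)
    (hd : 2 * t + s ≤ X + 2 * t * (r * M))
    (hc : r * XS ≤ (4 * t + 2 * s + D * s) * M + XS)
    (hc1 : s < 2 → r * XS ≤ (2 * t + 1) * M)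
    (hf : s ≤ r * XS) : False := by
  have hr1 : 4 * K + 3.93 ≤ r := by
    by_contra h
    push Not at h
    nlinarith
  have hX0 : 0 ≤ X := hXS.trans hX
  have hrM0 : 0 ≤ r * M := mul_nonneg hr0 hM0
  set A := r ^ 2 - (1 + D) * r - (2 + D) with hA
  -- main
  have Q : X * A ≤ 2 * t * r + (8 * t + X * (1 + 2 * t)) * (r * M) := by
    have e1 : (2 * t + s) * (r * M) ≤ (X + 2 * t * (r * M)) * (r * M) :=
      mul_le_mul_of_nonneg_right hd hrM0
    have e2 : (t * (r * M)) * (r * M) ≤ (t * (r * M)) * (1 + X) :=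
      mul_le_mul_of_nonneg_left ha (mul_nonneg ht0 hrM0)
    rw [hA]
    nlinarith
  have h10 : (1 + 2 * t) * X ≤ 10 * t := by
    have e1 : (8 * t + X * (1 + 2 * t)) * (r * M) ≤ (8 * t + X * (1 + 2 * t)) * r := by
      refine mul_le_mul_of_nonneg_left ?_ (by positivity)
      nlinarith
    have e2 : (2 * K + 1) * r ≤ A - (1 + 2 * t) * r := by
      rw [hA, hD]
      nlinarith [mul_le_mul_of_nonneg_right hr1 hr0]
    have e3 : X * ((2 * K + 1) * r) ≤ X * (A - (1 + 2 * t) * r) := mul_le_mul_of_nonneg_left e2 hX0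
    have e4 : (X * (2 * K + 1)) * r ≤ (10 * t) * r := by nlinarith
    have hrp : 0 < r := by linarith
    have e5 := le_of_mul_le_mul_right e4 hrp
    nlinarith [mul_nonneg hX0 (sub_nonneg.2 htK)]
  have Q2 : X * A ≤ 2 * t * r + (8 * t + X * (1 + 2 * t)) * (1 + X) :=
    Q.trans (by
      have := mul_le_mul_of_nonneg_left ha (show 0 ≤ 8 * t + X * (1 + 2 * t) by positivity)
      linarith)
  have hX1 : X ≤ 1 := by
    have e1 : X * (A - 20 * t - 1) ≤ 8 * t + 2 * t * r := by
      nlinarith [mul_le_mul_of_nonneg_left h10 hX0]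
    have e2 : 8 * t + 2 * t * r < A - 20 * t - 1 := by
      rw [hA, hD]
      have : (4 * K + 3.93) * (2 * K + 2.93) ≤ r * (r - (1 + 2 * K)) :=
        mul_le_mul hr1 (by linarith) (by linarith) hr0
      nlinarith [sq_nonneg (K - 1/2)]
    by_contra h
    push Not at h
    have : 0 < A - 20 * t - 1 := lt_of_le_of_lt (by positivity) e2
    have := mul_lt_mul_of_pos_right h this
    linarith
  have hX7 : X ≤ 0.7 := by
    have e1 : X * (A - 12 * t - 2) ≤ 8 * t + 2 * t * r := by
      nlinarith [mul_le_mul_of_nonneg_left hX1 (show 0 ≤ X * (1 + 2 * t) by positivity)]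
    have e2 : 8 * t + 2 * t * r < 0.7 * (A - 12 * t - 2) := by
      rw [hA, hD]
      have h1 : (4 * K + 3.93) * (0.8 * K + 2.05) ≤ r * (0.7 * r - (0.7 + 2 * K)) :=
        mul_le_mul hr1 (by linarith) (by linarith) hr0
      have h2 : t * r ≤ K * r := mul_le_mul_of_nonneg_right htK hr0
      nlinarith [sq_nonneg (K - 3/4)]
    by_contra h
    push Not at h
    have : 0 < A - 12 * t - 2 := by
      have : 0 ≤ 8 * t + 2 * t * r := by positivity
      linarith
    have := mul_lt_mul_of_pos_right h this
    linarith
  by_cases h2 : s < 2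
  · have e1 := mul_le_mul_of_nonneg_left (hc1 h2) hr0
    have e2 : r * s ≤ r * (r * XS) := mul_le_mul_of_nonneg_left hf hr0
    have e3 : (2 * t + 1) * (r * M) ≤ (2 * K + 1) * 1.7 :=
      mul_le_mul (by linarith) (by linarith) hrM0 (by linarith)
    nlinarith
  · push Not at h2
    have e0 : 4 * t + 2 * s + D * s ≤ s * (2 * K + 2) := by rw [hD]; nlinarith
    have e1 : (r - 1) * XS ≤ s * (2 * K + 2) * M := by
      have := mul_le_mul_of_nonneg_right e0 hM0
      linarith
    have e2 : (r - 1) * s ≤ (r - 1) * (r * XS) := mul_le_mul_of_nonneg_left hf (by linarith)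
    have e3 : s * (2 * K + 2) * (r * M) ≤ s * (2 * K + 2) * 1.7 :=
      mul_le_mul_of_nonneg_left (by linarith) (by positivity)
    have e4 := mul_le_mul_of_nonneg_left e1 hr0
    have e5 : s * (r - 1) ≤ s * ((2 * K + 2) * 1.7) := by nlinarith
    have e6 := le_of_mul_le_mul_left e5 (by linarith)
    linarith

section H
variable {V : Type*} [Fintype V]

lemma T0 (x : V → ℝ) (B : Finset V) (M : ℝ) (hM : ∀ z ∈ B, x z ≤ M) (hM0 : 0 ≤ M)
    (R : V → Prop) (c : ℕ) (hc : (B.filter R).card ≤ c) :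
    ∑ z ∈ B, (if R z then x z else 0) ≤ c * M := by
  rw [← Finset.sum_filter]
  refine (Finset.sum_le_card_nsmul _ _ M (fun z hz => hM z (Finset.mem_filter.1 hz).1)).trans ?_
  rw [nsmul_eq_mul]
  exact mul_le_mul_of_nonneg_right (by exact_mod_cast hc) hM0

lemma T1 (x : V → ℝ) (A B : Finset V) (M : ℝ) (hM : ∀ z ∈ B, x z ≤ M) (hM0 : 0 ≤ M)
    (R : V → V → Prop) (c : ℕ) (hc : ∀ v ∈ A, (B.filter (fun z => R v z)).card ≤ c) :
    ∑ v ∈ A, ∑ z ∈ B, (if R v z then x z else 0) ≤ A.card * (c * M) := by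
  rw [← nsmul_eq_mul]
  exact Finset.sum_le_card_nsmul _ _ _ (fun v hv => T0 x B M hM hM0 (R v) c (hc v hv))

lemma T2 (x : V → ℝ) (A B : Finset V) (hx : ∀ z, 0 ≤ x z)
    (R : V → V → Prop) (c : ℕ) (hc : ∀ z ∈ B, (A.filter (fun v => R v z)).card ≤ c) :
    ∑ v ∈ A, ∑ z ∈ B, (if R v z then x z else 0) ≤ c * ∑ z ∈ B, x z := by
  rw [Finset.sum_comm, Finset.mul_sum]
  refine Finset.sum_le_sum fun z hz => ?_
  rw [← Finset.sum_filter, Finset.sum_const, nsmul_eq_mul]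
  exact mul_le_mul_of_nonneg_right (by exact_mod_cast hc z hz) (hx z)

lemma T3 (x : V → ℝ) (A B : Finset V) (M : ℝ) (hM : ∀ z ∈ B, x z ≤ M) (hM0 : 0 ≤ M)
    (R : V → V → Prop) (c : ℕ) (hc : ((A ×ˢ B).filter (fun q => R q.1 q.2)).card ≤ c) :
    ∑ v ∈ A, ∑ z ∈ B, (if R v z then x z else 0) ≤ c * M := by
  rw [← Finset.sum_product' A B (fun v z => if R v z then x z else 0), ← Finset.sum_filter]
  refine (Finset.sum_le_card_nsmul _ _ M (fun z hz =>
    hM z.2 (Finset.mem_product.1 (Finset.mem_filter.1 hz).1).2)).trans ?_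
  rw [nsmul_eq_mul]
  exact mul_le_mul_of_nonneg_right (by exact_mod_cast hc) hM0

lemma card_filter_eq_le_one (B : Finset V) (R : V → Prop) (h : ∀ a ∈ B, ∀ b ∈ B, R a → R b → a = b) :
    (B.filter R).card ≤ 1 := by
  rw [Finset.card_le_one]
  intro a ha b hb
  rw [Finset.mem_filter] at ha hb
  exact h a ha.1 b hb.1 ha.2 hb.2

lemma pw3 {a b c d : Prop} {y : ℝ} (hy : 0 ≤ y) (h : a → b ∨ c ∨ d) :
    (if a then y else 0) ≤ (if b then y else 0) + (if c then y else 0) + (if d then y else 0) := by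
  by_cases ha : a
  · rcases h ha with h | h | h <;> simp only [ha, h, if_true] <;> split_ifs <;> linarith
  · simp only [ha, if_false]; split_ifs <;> linarith

lemma pw4 {a b c d e : Prop} {y : ℝ} (hy : 0 ≤ y) (h : a → b ∨ c ∨ d ∨ e) :
    (if a then y else 0) ≤ (if b then y else 0) + (if c then y else 0) + (if d then y else 0)
      + (if e then y else 0) := by
  by_cases ha : a
  · rcases h ha with h | h | h | h <;> simp only [ha, h, if_true] <;> split_ifs <;> linarith
  · simp only [ha, if_false]; split_ifs <;> linarith

set_option maxHeartbeats 1000000 in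
lemma core {K t : ℕ} (hK : 1 ≤ K) (htK : t ≤ K) {G G' : SimpleGraph V} {u : V}
    (hcard : 16 * (K + 1) ^ 2 ≤ Fintype.card V)
    (hst : St G u t G')
    (hind : ∀ a b, G'.Adj u a → G'.Adj u b → ¬ G.Adj a b)
    (huniq : ∀ w a b, w ≠ u → G'.Adj u a → G'.Adj u b → G.Adj w a → G.Adj w b → a = b)
    {p : V → V} {U : V → V → Prop} (hUs : ∀ v w, U v w → U w v)
    (hUd : ∀ v, (Finset.univ.filter (fun w => U v w)).card ≤ 2 * (K - t))
    (hpU : ∀ v w, G'.Adj v w → p v = w ∨ p w = v ∨ U v w)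
    {x : V → ℝ} {r : ℝ} (hr0 : 0 ≤ r) (hr : (Fintype.card V : ℝ) - 1 ≤ r ^ 2)
    (hx0 : ∀ v, 0 ≤ x v) (hx1 : ∀ v, x v ≤ 1) (hu : x u = 1)
    (hx : ∀ v, Op G x v = r * x v)
    (hfar : ∀ v, v ≠ u → ¬ G.Adj u v → 1 ≤ r * x v) (v₀ : V) (hv₀ : v₀ ≠ u) (hv₀' : ¬ G.Adj u v₀) :
    False := by
  set I : Finset V := Finset.univ.filter (fun a => G'.Adj u a) with hI
  set T : Finset V := Finset.univ.filter (fun a => G.Adj u a ∧ ¬ G'.Adj u a) with hT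
  set S : Finset V := Finset.univ.filter (fun a => a ≠ u ∧ ¬ G.Adj u a) with hS
  set Q : Finset V := T ∪ S with hQ
  set E : Finset V := Finset.univ.erase u with hE
  have mI : ∀ a, a ∈ I ↔ G'.Adj u a := fun a => by simp [hI]
  have mT : ∀ a, a ∈ T ↔ G.Adj u a ∧ ¬ G'.Adj u a := fun a => by simp [hT]
  have mS : ∀ a, a ∈ S ↔ a ≠ u ∧ ¬ G.Adj u a := fun a => by simp [hS]
  have mE : ∀ a, a ∈ E ↔ a ≠ u := fun a => by simp [hE]
  have dTS : Disjoint T S := by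
    rw [Finset.disjoint_left]; intro a h1 h2
    rw [mT] at h1; rw [mS] at h2; exact h2.2 h1.1
  have mQ : ∀ a, a ∈ Q ↔ a ≠ u ∧ ¬ G'.Adj u a := by
    intro a
    rw [hQ, Finset.mem_union, mT, mS]
    constructor
    · rintro (h | h)
      · exact ⟨h.1.ne', h.2⟩
      · exact ⟨h.1, fun h' => h.2 (hst.le h')⟩
    · rintro ⟨h1, h2⟩
      by_cases h3 : G.Adj u a
      · exact Or.inl ⟨h3, h2⟩
      · exact Or.inr ⟨h1, h3⟩
  have dIQ : Disjoint I Q := by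
    rw [Finset.disjoint_left]; intro a h1 h2
    rw [mI] at h1; rw [mQ] at h2; exact h2.2 h1
  have eE : E = I ∪ Q := by
    ext a
    rw [Finset.mem_union, mE, mI, mQ]
    constructor
    · intro h; by_cases h' : G'.Adj u a
      · exact Or.inl h'
      · exact Or.inr ⟨h, h'⟩
    · rintro (h | h)
      · exact h.ne'
      · exact h.1
  have sE : ∀ f : V → ℝ, ∑ v ∈ E, f v = ∑ v ∈ I, f v + ∑ v ∈ Q, f v := fun f => by
    rw [eE, Finset.sum_union dIQ]
  have sQ : ∀ f : V → ℝ, ∑ v ∈ Q, f v = ∑ v ∈ T, f v + ∑ v ∈ S, f v := fun f => by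
    rw [hQ, Finset.sum_union dTS]
  have sU : ∀ f : V → ℝ, ∑ v, f v = f u + ∑ v ∈ E, f v := fun f => by
    rw [hE, Finset.add_sum_erase _ _ (Finset.mem_univ u)]
  have cT : T.card = 2 * t := hst.cardT
  set s := S.card with hs
  have cQ : Q.card = 2 * t + s := by rw [hQ, Finset.card_union_of_disjoint dTS, cT]
  have cV : Fintype.card V = 1 + (I.card + (2 * t + s)) := by
    have h1 : E.card = I.card + Q.card := by rw [eE, Finset.card_union_of_disjoint dIQ]
    have h2 : E.card = Fintype.card V - 1 := by
      rw [hE, Finset.card_erase_of_mem (Finset.mem_univ u), Finset.card_univ]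
    have h3 : 0 < Fintype.card V := Fintype.card_pos_iff.2 ⟨u⟩
    omega
  have hs1 : 1 ≤ s := Finset.card_pos.2 ⟨v₀, (mS _).2 ⟨hv₀, hv₀'⟩⟩
  obtain ⟨w₀, hw₀E, hw₀⟩ := Finset.exists_max_image E x ⟨v₀, (mE _).2 hv₀⟩
  set M := x w₀ with hMdef
  have hM0 : 0 ≤ M := hx0 _
  have IE : I ⊆ E := by rw [eE]; exact Finset.subset_union_left
  have QE : Q ⊆ E := by rw [eE]; exact Finset.subset_union_right
  have TQ : T ⊆ Q := Finset.subset_union_left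
  have SQ : S ⊆ Q := Finset.subset_union_right
  set X := ∑ v ∈ Q, x v with hXdef
  set XS := ∑ v ∈ S, x v with hXSdef
  set XT := ∑ v ∈ T, x v with hXTdef
  have hXX : X = XT + XS := sQ x
  have hXT0 : 0 ≤ XT := Finset.sum_nonneg fun v _ => hx0 v
  have hXS0 : 0 ≤ XS := Finset.sum_nonneg fun v _ => hx0 v
  have hX0 : 0 ≤ X := Finset.sum_nonneg fun v _ => hx0 v
  have hop : ∀ v, r * x v = (if G.Adj v u then 1 else 0) + ∑ z ∈ E, (if G.Adj v z then x z else 0) := by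
    intro v
    rw [← hx v, Op, sU, hu]
  have Ne : ∀ v z, 0 ≤ (if G.Adj v z then x z else 0) := fun v z => by
    split_ifs; exacts [hx0 z, le_rfl]
  -- at most one neighbour in I
  have oneI : ∀ w, w ≠ u → (I.filter (fun z => G.Adj w z)).card ≤ 1 := fun w hw =>
    card_filter_eq_le_one _ _ fun a ha b hb h1 h2 =>
      huniq w a b hw ((mI a).1 ha) ((mI b).1 hb) h1 h2
  have oneI' : ∀ w, w ≠ u → (I.filter (fun z => G.Adj z w)).card ≤ 1 := fun w hw =>
    card_filter_eq_le_one _ _ fun a ha b hb h1 h2 =>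
      huniq w a b hw ((mI a).1 ha) ((mI b).1 hb) h1.symm h2.symm
  have zeroI : ∀ w ∈ I, ∑ z ∈ I, (if G.Adj w z then x z else 0) = 0 := by
    intro w hw
    refine Finset.sum_eq_zero fun z hz => ?_
    rw [if_neg (hind w z ((mI w).1 hw) ((mI z).1 hz))]
  have hopI : ∀ w ∈ I, r * x w = 1 + ∑ z ∈ Q, (if G.Adj w z then x z else 0) := by
    intro w hw
    rw [hop w, sE, zeroI w hw, if_pos (hst.le ((mI w).1 hw)).symm, zero_add]
  have leQ : ∀ w, ∑ z ∈ Q, (if G.Adj w z then x z else 0) ≤ X := fun w =>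
    Finset.sum_le_sum fun z _ => by split_ifs; exacts [le_rfl, hx0 z]
  have IQ : ∑ w ∈ I, ∑ z ∈ Q, (if G.Adj w z then x z else 0) ≤ X := by
    have := T2 x I Q hx0 G.Adj 1 (fun z hz => oneI' z ((mQ z).1 hz).1)
    simpa using this
  have hU' : ∀ z, (Finset.univ.filter (fun v => U v z)).card ≤ 2 * (K - t) := by
    intro z
    refine (Finset.card_le_card ?_).trans (hUd z)
    intro v hv
    simp only [Finset.mem_filter, Finset.mem_univ, true_and] at hv ⊢
    exact hUs _ _ hv
  -- (a)
  have ha : r * M ≤ 1 + X := by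
    by_cases hwI : w₀ ∈ I
    · rw [hMdef, hopI w₀ hwI]
      linarith [leQ w₀]
    · have hwQ : w₀ ∈ Q := by
        have := hw₀E; rw [eE, Finset.mem_union] at this; tauto
      have h1 : ∑ z ∈ I, (if G.Adj w₀ z then x z else 0) ≤ M := by
        have := T0 x I M (fun z hz => hw₀ z (IE hz)) hM0 (fun z => G.Adj w₀ z) 1
          (oneI w₀ ((mE _).1 hw₀E))
        simpa using this
      have h2 : ∑ z ∈ Q, (if G.Adj w₀ z then x z else 0) ≤ X - M := by
        rw [hXdef, ← Finset.add_sum_erase _ _ hwQ, ← Finset.add_sum_erase _ x hwQ]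
        simp only [SimpleGraph.irrefl, if_false, zero_add]
        have : ∑ z ∈ Q.erase w₀, (if G.Adj w₀ z then x z else 0) ≤ ∑ z ∈ Q.erase w₀, x z :=
          Finset.sum_le_sum fun z _ => by split_ifs; exacts [le_rfl, hx0 z]
        linarith
      have h3 : (if G.Adj w₀ u then (1 : ℝ) else 0) ≤ 1 := by split_ifs <;> norm_num
      rw [hMdef, hop w₀, sE]
      linarith
  -- (d)
  have hXT : XT ≤ 2 * t * M := by
    have := Finset.sum_le_card_nsmul T x M (fun z hz => hw₀ z (QE (TQ hz)))
    rw [cT, nsmul_eq_mul] at this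
    push_cast at this
    exact this
  have hd : (2 * t + s : ℝ) ≤ X + 2 * t * (r * M) := by
    have h1 : r = ∑ v ∈ I, x v + XT := by
      have := hop u
      rw [hu, mul_one, sE, sQ] at this
      simp only [SimpleGraph.irrefl, if_false, zero_add] at this
      have e1 : ∑ z ∈ I, (if G.Adj u z then x z else 0) = ∑ v ∈ I, x v :=
        Finset.sum_congr rfl fun z hz => if_pos (hst.le ((mI z).1 hz))
      have e2 : ∑ z ∈ T, (if G.Adj u z then x z else 0) = XT :=
        Finset.sum_congr rfl fun z hz => if_pos ((mT z).1 hz).1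
      have e3 : ∑ z ∈ S, (if G.Adj u z then x z else 0) = 0 :=
        Finset.sum_eq_zero fun z hz => if_neg ((mS z).1 hz).2
      rw [e1, e2, e3] at this
      linarith
    have h2 : r * ∑ v ∈ I, x v ≤ I.card + X := by
      rw [Finset.mul_sum, Finset.sum_congr rfl hopI, Finset.sum_add_distrib, Finset.sum_const,
        nsmul_eq_mul, mul_one]
      linarith
    have h3 : (Fintype.card V : ℝ) = 1 + (I.card + (2 * t + s)) := by rw [cV]; push_cast; ring
    have h4 := mul_le_mul_of_nonneg_left hXT hr0
    have h5 : r ^ 2 = r * ∑ v ∈ I, x v + r * XT := by rw [← mul_add, ← h1]; ring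
    nlinarith
  have hDc : ((2 * (K - t) : ℕ) : ℝ) = 2 * ((K : ℝ) - t) := by
    push_cast [Nat.cast_sub htK]; ring
  set D : ℝ := 2 * ((K : ℝ) - t) with hD
  -- removed pairs
  obtain ⟨P, hPd⟩ : ∃ P : V → V → Prop, ∀ v z, P v z ↔ (G.Adj v z ∧ ¬ G'.Adj v z) :=
    ⟨_, fun _ _ => Iff.rfl⟩
  have hP4 : ∑ v ∈ Q, ∑ z ∈ E, (if P v z then x z else 0) ≤ 4 * t * M := by
    have := T3 x Q E M hw₀ hM0 P (4 * t) (by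
      refine (Finset.card_le_card ?_).trans hst.pairs
      intro q hq
      simp only [Finset.mem_filter, Finset.mem_product, Finset.mem_univ, true_and] at hq ⊢
      exact ⟨⟨((mQ _).1 hq.1.1).1, (mE _).1 hq.1.2⟩, (hPd _ _).1 hq.2⟩)
    push_cast at this
    exact this
  have hP2 : ∑ v ∈ S, ∑ z ∈ E, (if P v z then x z else 0) ≤ 2 * t * M := by
    have := T3 x S E M hw₀ hM0 P (2 * t) (by
      refine (Finset.card_le_card ?_).trans hst.pairsS
      intro q hq
      simp only [Finset.mem_filter, Finset.mem_product, Finset.mem_univ, true_and] at hq ⊢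
      exact ⟨⟨⟨((mS _).1 hq.1.1).1, (mE _).1 hq.1.2⟩, ((mS _).1 hq.1.1).2⟩, (hPd _ _).1 hq.2⟩)
    push_cast at this
    exact this
  have hpar : ∀ A : Finset V, ∑ v ∈ A, ∑ z ∈ E, (if p v = z then x z else 0) ≤ A.card * M := by
    intro A
    have := T1 x A E M hw₀ hM0 (fun v z => p v = z) 1 (fun v _ =>
      card_filter_eq_le_one _ _ fun a _ b _ h1 h2 => h1.symm.trans h2)
    simpa using this
  -- (q)
  have hq : r * (r * X) ≤ r * (2 * t + 4 * t * M + (2 * t + s) * M + (1 + D) * X)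
      + (2 * t + s) + (1 + D) * X := by
    obtain ⟨R, hRd⟩ : ∃ R : V → V → Prop, ∀ v z, R v z ↔ (G'.Adj v z ∧ (p z = v ∨ U v z)) :=
      ⟨_, fun _ _ => Iff.rfl⟩
    have hRc : ∀ z, (Q.filter (fun v => R v z)).card ≤ 1 + 2 * (K - t) := by
      intro z
      have h1 := Finset.card_union_le {p z} (Finset.univ.filter (fun v => U v z))
      have h2 := hU' z
      rw [Finset.card_singleton] at h1
      refine (Finset.card_le_card ?_).trans (h1.trans (by omega))
      intro v hv
      simp only [Finset.mem_filter, Finset.mem_union, Finset.mem_singleton, Finset.mem_univ,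
        true_and] at hv ⊢
      rcases ((hRd _ _).1 hv.2).2 with h | h
      · exact Or.inl h.symm
      · exact Or.inr h
    have e1 : r * X = ∑ v ∈ Q, (if G.Adj v u then (1 : ℝ) else 0) +
        ∑ v ∈ Q, ∑ z ∈ E, (if G.Adj v z then x z else 0) := by
      rw [hXdef, Finset.mul_sum, Finset.sum_congr rfl fun v _ => hop v, Finset.sum_add_distrib]
    have e2 : ∑ v ∈ Q, (if G.Adj v u then (1 : ℝ) else 0) ≤ 2 * t := by
      rw [sQ]
      have f1 : ∑ v ∈ S, (if G.Adj v u then (1 : ℝ) else 0) = 0 :=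
        Finset.sum_eq_zero fun z hz => if_neg fun h => ((mS z).1 hz).2 h.symm
      have f2 : ∑ v ∈ T, (if G.Adj v u then (1 : ℝ) else 0) = T.card := by
        rw [Finset.sum_congr rfl fun z hz => if_pos ((mT z).1 hz).1.symm]; simp
      rw [f1, f2, cT]; push_cast; linarith
    have e3 : ∑ v ∈ Q, ∑ z ∈ E, (if G.Adj v z then x z else 0) ≤
        ∑ v ∈ Q, ∑ z ∈ E, (if P v z then x z else 0) +
        ∑ v ∈ Q, ∑ z ∈ E, (if p v = z then x z else 0) +
        ∑ v ∈ Q, ∑ z ∈ E, (if R v z then x z else 0) := by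
      simp only [← Finset.sum_add_distrib]
      refine Finset.sum_le_sum fun v _ => Finset.sum_le_sum fun z _ => ?_
      refine pw3 (hx0 z) fun h1 => ?_
      by_cases h2 : G'.Adj v z
      · rcases hpU v z h2 with h3 | h3 | h3
        · exact Or.inr (Or.inl h3)
        · exact Or.inr (Or.inr ((hRd _ _).2 ⟨h2, Or.inl h3⟩))
        · exact Or.inr (Or.inr ((hRd _ _).2 ⟨h2, Or.inr h3⟩))
      · exact Or.inl ((hPd _ _).2 ⟨h1, h2⟩)
    have e4 := hpar Q
    have e5 : ∑ v ∈ Q, ∑ z ∈ Q, (if R v z then x z else 0) ≤ (1 + D) * X := by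
      have := T2 x Q Q hx0 R (1 + 2 * (K - t)) (fun z _ => hRc z)
      rw [Nat.cast_add, hDc] at this
      simpa using this
    have e6 : r * ∑ v ∈ Q, ∑ z ∈ I, (if R v z then x z else 0) ≤ (2 * t + s) + (1 + D) * X := by
      have g1 : r * ∑ v ∈ Q, ∑ z ∈ I, (if R v z then x z else 0) =
          ∑ v ∈ Q, ∑ z ∈ I, (if R v z then (1 : ℝ) else 0) +
          ∑ v ∈ Q, ∑ z ∈ I, (if R v z then ∑ y ∈ Q, (if G.Adj z y then x y else 0) else 0) := by
        simp only [Finset.mul_sum, ← Finset.sum_add_distrib]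
        refine Finset.sum_congr rfl fun v _ => Finset.sum_congr rfl fun z hz => ?_
        split_ifs
        · exact hopI z hz
        · simp
      have g2 : ∑ v ∈ Q, ∑ z ∈ I, (if R v z then (1 : ℝ) else 0) ≤ 2 * t + s := by
        have := T1 (fun _ => (1 : ℝ)) Q I 1 (fun _ _ => le_rfl) zero_le_one R 1 (fun v hv => by
          refine (Finset.card_le_card ?_).trans (oneI v ((mQ v).1 hv).1)
          intro z hz
          rw [Finset.mem_filter] at hz ⊢
          exact ⟨hz.1, hst.le ((hRd _ _).1 hz.2).1⟩)
        rw [cQ] at this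
        push_cast at this
        linarith
      have g3 := T2 (fun z => ∑ y ∈ Q, (if G.Adj z y then x y else 0)) Q I
        (fun z => Finset.sum_nonneg fun y _ => Ne z y) R (1 + 2 * (K - t)) (fun z _ => hRc z)
      rw [Nat.cast_add, hDc, Nat.cast_one] at g3
      have hD0 : 0 ≤ 1 + D := by
        have : (t : ℝ) ≤ K := by exact_mod_cast htK
        rw [hD]; linarith
      have g4 := mul_le_mul_of_nonneg_left IQ hD0
      rw [g1]
      linarith
    have e7 : ∑ v ∈ Q, ∑ z ∈ E, (if R v z then x z else 0) =
        ∑ v ∈ Q, ∑ z ∈ I, (if R v z then x z else 0) + ∑ v ∈ Q, ∑ z ∈ Q, (if R v z then x z else 0) := by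
      rw [← Finset.sum_add_distrib]
      exact Finset.sum_congr rfl fun v _ => sE _
    rw [cQ] at e4
    push_cast at e4
    have e8 : r * X ≤ (2 * t + 4 * t * M + (2 * t + s) * M + (1 + D) * X) +
        ∑ v ∈ Q, ∑ z ∈ I, (if R v z then x z else 0) := by linarith
    have e9 := mul_le_mul_of_nonneg_left e8 hr0
    rw [mul_add] at e9
    linarith
  have hopS : r * XS = ∑ v ∈ S, ∑ z ∈ E, (if G.Adj v z then x z else 0) := by
    rw [hXSdef, Finset.mul_sum]
    refine Finset.sum_congr rfl fun v hv => ?_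
    rw [hop v, if_neg fun h => ((mS v).1 hv).2 h.symm, zero_add]
  -- (c)
  have hc : r * XS ≤ (4 * t + 2 * s + D * s) * M + XS := by
    obtain ⟨C, hCd⟩ : ∃ C : V → V → Prop, ∀ v z, C v z ↔ (G'.Adj v z ∧ p z = v) :=
      ⟨_, fun _ _ => Iff.rfl⟩
    have e3 : ∑ v ∈ S, ∑ z ∈ E, (if G.Adj v z then x z else 0) ≤
        ∑ v ∈ S, ∑ z ∈ E, (if P v z then x z else 0) +
        ∑ v ∈ S, ∑ z ∈ E, (if p v = z then x z else 0) +
        ∑ v ∈ S, ∑ z ∈ E, (if C v z then x z else 0) +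
        ∑ v ∈ S, ∑ z ∈ E, (if U v z then x z else 0) := by
      simp only [← Finset.sum_add_distrib]
      refine Finset.sum_le_sum fun v _ => Finset.sum_le_sum fun z _ => ?_
      refine pw4 (hx0 z) fun h1 => ?_
      by_cases h2 : G'.Adj v z
      · rcases hpU v z h2 with h3 | h3 | h3
        · exact Or.inr (Or.inl h3)
        · exact Or.inr (Or.inr (Or.inl ((hCd _ _).2 ⟨h2, h3⟩)))
        · exact Or.inr (Or.inr (Or.inr h3))
      · exact Or.inl ((hPd _ _).2 ⟨h1, h2⟩)
    have e4 := hpar S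
    have hC1 : ∀ z, (S.filter (fun v => C v z)).card ≤ 1 := fun z =>
      card_filter_eq_le_one _ _ fun a _ b _ h1 h2 =>
        ((hCd _ _).1 h1).2.symm.trans ((hCd _ _).1 h2).2
    have e5 : ∑ v ∈ S, ∑ z ∈ S, (if C v z then x z else 0) ≤ XS := by
      have := T2 x S S hx0 C 1 (fun z _ => hC1 z)
      simpa using this
    have e6 : ∑ v ∈ S, ∑ z ∈ T, (if C v z then x z else 0) ≤ XT := by
      have := T2 x S T hx0 C 1 (fun z _ => hC1 z)
      simpa using this
    have e7 : ∑ v ∈ S, ∑ z ∈ I, (if C v z then x z else 0) ≤ s * M := by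
      have := T1 x S I M (fun z hz => hw₀ z (IE hz)) hM0 C 1 (fun v hv => by
          refine (Finset.card_le_card ?_).trans (oneI v ((mS v).1 hv).1)
          intro z hz
          rw [Finset.mem_filter] at hz ⊢
          exact ⟨hz.1, hst.le ((hCd _ _).1 hz.2).1⟩)
      simpa using this
    have e8 : ∑ v ∈ S, ∑ z ∈ E, (if U v z then x z else 0) ≤ s * (D * M) := by
      have := T1 x S E M hw₀ hM0 U (2 * (K - t)) (fun v _ =>
        (Finset.card_le_card (Finset.filter_subset_filter _ (Finset.subset_univ _))).trans (hUd v))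
      rw [hDc] at this
      exact this
    have e9 : ∑ v ∈ S, ∑ z ∈ E, (if C v z then x z else 0) =
        ∑ v ∈ S, ∑ z ∈ I, (if C v z then x z else 0) + (∑ v ∈ S, ∑ z ∈ T, (if C v z then x z else 0)
          + ∑ v ∈ S, ∑ z ∈ S, (if C v z then x z else 0)) := by
      rw [← Finset.sum_add_distrib, ← Finset.sum_add_distrib]
      exact Finset.sum_congr rfl fun v _ => by rw [sE, sQ]
    rw [hopS]
    linarith
  have hc1 : (s : ℝ) < 2 → r * XS ≤ (2 * t + 1) * M := by
    intro h
    have hs1' : S.card = 1 := by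
      have : s < 2 := by exact_mod_cast h
      omega
    obtain ⟨v, hv⟩ := Finset.card_eq_one.1 hs1'
    have hvS : v ∈ S := by rw [hv]; simp
    rw [hopS, hv, Finset.sum_singleton, sE, sQ, hv, Finset.sum_singleton]
    simp only [SimpleGraph.irrefl, if_false, add_zero]
    have h1 := T0 x I M (fun z hz => hw₀ z (IE hz)) hM0 (fun z => G.Adj v z) 1
      (oneI v ((mS v).1 hvS).1)
    have h2 : ∑ z ∈ T, (if G.Adj v z then x z else 0) ≤ XT :=
      Finset.sum_le_sum fun z _ => by split_ifs; exacts [le_rfl, hx0 z]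
    push_cast at h1
    linarith
  have hf : (s : ℝ) ≤ r * XS := by
    have := Finset.card_nsmul_le_sum S (fun v => r * x v) 1
      (fun v hv => hfar v ((mS v).1 hv).1 ((mS v).1 hv).2)
    rw [nsmul_eq_mul, mul_one, ← Finset.mul_sum] at this
    exact this
  refine numeric K t s r M X XS D (by exact_mod_cast hK) (by positivity) (by exact_mod_cast htK)
    (by exact_mod_cast hs1) hD hr0 ?_ hM0 (hx1 _) hXS0 (by linarith) ha hq hd hc hc1 hf
  have : (16 * ((K : ℝ) + 1) ^ 2) ≤ Fintype.card V := by exact_mod_cast hcard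
  linarith
end H

/-- For `k ≥ 2` and `n ≥ 16k²`, a spectral-extremal graph among all `n`-vertex graphs
without `k` pairwise edge-disjoint cycles has a dominating vertex. -/
theorem spectral_extremal_has_dominating_vertex (k n : ℕ) (hk : 2 ≤ k)
    (hn : 16 * k ^ 2 ≤ n) {V : Type*} [Fintype V] (hV : Fintype.card V = n)
    (G : SimpleGraph V) (hG : phi G ≤ k - 1)
    (hmax : ∀ G' : SimpleGraph V, phi G' ≤ k - 1 → specRad G' ≤ specRad G) :
    ∃ u : V, ∀ v, v ≠ u → G.Adj u v := by
  obtain ⟨K, rfl⟩ : ∃ K, k = K + 1 := ⟨k - 1, by omega⟩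
  simp only [Nat.add_sub_cancel] at hG hmax
  have hcard : 16 * (K + 1) ^ 2 ≤ Fintype.card V := hV ▸ hn
  have hne : Nonempty V := by
    rw [← Fintype.card_pos_iff]
    have : 0 < 16 * (K + 1) ^ 2 := by positivity
    omega
  obtain ⟨f, hf, hf0, hfe⟩ := perron G
  obtain ⟨u, -, hu⟩ := Finset.exists_max_image Finset.univ f Finset.univ_nonempty
  have hfu : 0 < f u := by
    rcases (hf0 u).eq_or_lt with h | h
    · exfalso; apply hf; ext v
      exact le_antisymm (by rw [Pi.zero_apply, h]; exact hu v (Finset.mem_univ v)) (hf0 v)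
    · exact h
  by_contra hcon
  push Not at hcon
  obtain ⟨v₀, hv₀, hv₀'⟩ := hcon u
  let x : V → ℝ := fun v => f v / f u
  have hx0 : ∀ v, 0 ≤ x v := fun v => div_nonneg (hf0 v) hfu.le
  have hx1 : ∀ v, x v ≤ 1 := fun v => (div_le_one hfu).2 (hu v (Finset.mem_univ v))
  have hxu : x u = 1 := div_self hfu.ne'
  have hx : ∀ v, Op G x v = specRad G * x v := by
    intro v
    have : Op G x v = Op G f v / f u := by
      simp only [Op, Finset.sum_div]
      refine Finset.sum_congr rfl fun w _ => ?_
      split_ifs <;> simp [x]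
    rw [this, hfe]; simp only [x]; ring
  have hq : Real.sqrt ((Fintype.card V : ℝ) - 1) ≤ specRad G :=
    (specRad_nonneg_of_star (starAt u) u (fun v hv => by
      simp [starAt, SimpleGraph.fromRel_adj, hv.symm])).trans (hmax _ (starAt_phi u K))
  have hr0 : 0 ≤ specRad G := (Real.sqrt_nonneg _).trans hq
  have hr : (Fintype.card V : ℝ) - 1 ≤ specRad G ^ 2 := (Real.sqrt_le_left hr0).1 hq
  have hno : ¬ HasEDC G (K + 1) := fun h => by
    have := hasEDC_le_phi h
    omega
  obtain ⟨t, G', htK, hst, hno', hind, huniq⟩ := exists_St u hno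
  obtain ⟨p, U, hUs, hUd, hpU⟩ := lemma_D (K - t) G' hno'
  exact core (by omega) htK hcard hst hind huniq hUs hUd hpU hr0 hr hx0 hx1 hxu hx
    (fun v hv hn => far_lower hG hmax hx0 hx hxu hv hn) v₀ hv₀ hv₀'

end PaperEDC
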